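/- arXiv:1202.6083 — 4 statements merged into one kernel-verified Lean document; each statement's English description precedes it below -/
import Mathlib

section
/- For all σ, μ ∈ M with values c_i and d_i on τ_i respectively, the following summation-by-parts identity holds: (Aσ, μ)_Γ = (σ, μ)_Γ + Σ_{i=1}^N (c_{i+1} − c_i)(\overline{d_{i+1}} − \overline{d_i})/l_i, where indices are taken modulo N. -/
/-- The operator `A : M → M` on piecewise constants (identified with their value vectors
`c : Fin N → ℂ`, indices mod `N`): `(Aσ)|_{τ_i} = c_i − ((c_{i+1} − c_i)/l_i² − (c_i − c_{i−1})/(l_i l_{i−1}))`. -/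
noncomputable def Aop {N : ℕ} [NeZero N] (l : Fin N → ℝ) (c : Fin N → ℂ) : Fin N → ℂ :=
  fun i => c i - ((c (i + 1) - c i) / (l i : ℂ) ^ 2
    - (c i - c (i - 1)) / ((l i : ℂ) * (l (i - 1) : ℂ)))

/-- The `L²(0,L)` inner product of two piecewise constants with value vectors `c, d`:
`(σ, μ)_Γ = ∫₀^L σ \overline{μ} ds = ∑ i, c_i \overline{d_i} l_i`. -/
noncomputable def ipGamma {N : ℕ} (l : Fin N → ℝ) (c d : Fin N → ℂ) : ℂ :=
  ∑ i, c i * (starRingEnd ℂ) (d i) * (l i : ℂ)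

theorem sum_sub_translate_mul {G R : Type*} [AddGroup G] [Fintype G]
    [NonUnitalNonAssocRing R] (u v : G → R) (h : G) :
    ∑ i, (u i - u (i - h)) * v i = -∑ i, u i * (v (i + h) - v i) := by
  have translate : ∑ i, u (i - h) * v i = ∑ i, u i * v (i + h) :=
    Fintype.sum_equiv (Equiv.subRight h) _ _ fun i => by
      simp only [Equiv.subRight_apply, sub_add_cancel]
  simp only [sub_mul, mul_sub, Finset.sum_sub_distrib, translate, neg_sub]

/-- The forward difference quotient `(c_{i+1} − c_i) / l_i`, indices mod `N`: the discrete
derivative whose backward differences, divided by `l_i`, form the second-order part of `Aop`. -/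
noncomputable def forwardDiffQuot {N : ℕ} [NeZero N] (l : Fin N → ℝ) (c : Fin N → ℂ) : Fin N → ℂ :=
  fun i => (c (i + 1) - c i) / (l i : ℂ)

theorem Aop_mul_length {N : ℕ} [NeZero N] {l : Fin N → ℝ} (c : Fin N → ℂ) {i : Fin N}
    (hi : l i ≠ 0) :
    Aop l c i * (l i : ℂ)
      = c i * (l i : ℂ) - (forwardDiffQuot l c i - forwardDiffQuot l c (i - 1)) := by
  have hi' : (l i : ℂ) ≠ 0 := Complex.ofReal_ne_zero.mpr hi
  simp only [Aop, forwardDiffQuot, sub_add_cancel]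
  field_simp

theorem ipGamma_Aop_eq_sub_sum {N : ℕ} [NeZero N] {l : Fin N → ℝ} (hl : ∀ i, l i ≠ 0)
    (c d : Fin N → ℂ) :
    ipGamma l (Aop l c) d
      = ipGamma l c d
        - ∑ i, (forwardDiffQuot l c i - forwardDiffQuot l c (i - 1)) * (starRingEnd ℂ) (d i) := by
  rw [ipGamma, ipGamma, ← Finset.sum_sub_distrib]
  refine Finset.sum_congr rfl fun i _ => ?_
  rw [mul_right_comm, Aop_mul_length c (hl i), sub_mul, mul_right_comm]

/-- For all `σ, μ ∈ M` with values `c_i` and `d_i` on `τ_i`, the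
summation-by-parts identity holds:
`(Aσ, μ)_Γ = (σ, μ)_Γ + ∑_{i=1}^N (c_{i+1} − c_i)(\overline{d_{i+1}} − \overline{d_i})/l_i`,
indices taken mod `N`. -/
theorem stmt_2 (L : ℝ) (hL : 0 < L) (N : ℕ) [NeZero N] (hN : 2 ≤ N)
    (l : Fin N → ℝ) (hl : ∀ i, 0 < l i) (hsum : ∑ i, l i = L)
    (c d : Fin N → ℂ) :
    ipGamma l (Aop l c) d
      = ipGamma l c d
        + ∑ i, (c (i + 1) - c i) * ((starRingEnd ℂ) (d (i + 1)) - (starRingEnd ℂ) (d i))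
            / (l i : ℂ) := by
  rw [ipGamma_Aop_eq_sub_sum (fun i => (hl i).ne'),
    sum_sub_translate_mul (forwardDiffQuot l c) (fun i => (starRingEnd ℂ) (d i)) 1, sub_neg_eq_add]
  simp only [forwardDiffQuot, div_mul_eq_mul_div]
end

section
/- For every σ ∈ M with values c_i one has (Aσ, σ)_Γ = Σ_{i=1}^N |c_i|² l_i + Σ_{i=1}^N |c_{i+1} − c_i|²/l_i ≥ ‖σ‖²_{L²(0,L)}. Consequently the linear operator A : M → M is invertible. -/
/-! Multiplying `(Aσ)_i` by `l_i` turns the second-order part of `A` into the backward difference of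
the quotients `(c_{i+1} - c_i) / l_i`. Summation by parts on the cycle, where there are no boundary
terms, moves this difference onto the test function and gives the quadratic form. It dominates the
`L²` norm, so `A` has trivial kernel, and an injective endomorphism of a finite-dimensional space is
bijective. -/

theorem sum_sub_translate_mul_eq_neg_sum {G R : Type*} [AddGroup G] [Fintype G]
    [NonUnitalNonAssocRing R] (f g : G → R) (a : G) :
    ∑ i, (f i - f (i - a)) * g i = -∑ i, f i * (g (i + a) - g i) := by
  have translate : ∑ i, f (i - a) * g i = ∑ i, f i * g (i + a) := by
    rw [← Equiv.sum_comp (Equiv.addRight a)]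
    simp only [Equiv.coe_addRight, add_sub_cancel_right]
  simp only [sub_mul, mul_sub, Finset.sum_sub_distrib, translate, neg_sub]

theorem eq_zero_of_sum_norm_sq_mul_nonpos {ι E : Type*} [Fintype ι] [NormedAddCommGroup E]
    {w : ι → ℝ} (hw : ∀ i, 0 < w i) {c : ι → E} (h : ∑ i, ‖c i‖ ^ 2 * w i ≤ 0) : c = 0 := by
  have term_nonneg (i : ι) : 0 ≤ ‖c i‖ ^ 2 * w i := mul_nonneg (sq_nonneg _) (hw i).le
  have sum_eq_zero : ∑ i, ‖c i‖ ^ 2 * w i = 0 :=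
    h.antisymm (Finset.sum_nonneg fun i _ => term_nonneg i)
  funext i
  have term_eq_zero : ‖c i‖ ^ 2 * w i = 0 :=
    (Finset.sum_eq_zero_iff_of_nonneg fun i _ => term_nonneg i).1 sum_eq_zero i (Finset.mem_univ i)
  simpa [(hw i).ne'] using term_eq_zero

theorem ipGamma_self {N : ℕ} (l : Fin N → ℝ) (c : Fin N → ℂ) :
    ipGamma l c c = ((∑ i, ‖c i‖ ^ 2 * l i : ℝ) : ℂ) := by
  simp only [ipGamma, Complex.mul_conj']
  push_cast
  rfl

section

variable {N : ℕ} [NeZero N] {l : Fin N → ℝ}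

/-- The forward difference quotient `(c_{i+1} - c_i) / l_i` of a piecewise constant on the closed
curve, in terms of which the second-order part of `A` is a backward difference. -/
noncomputable def forwardQuotient (l : Fin N → ℝ) (c : Fin N → ℂ) (i : Fin N) : ℂ :=
  (c (i + 1) - c i) / l i

theorem Aop_apply_mul (hl : ∀ i, l i ≠ 0) (c : Fin N → ℂ) (i : Fin N) :
    Aop l c i * l i = c i * l i - (forwardQuotient l c i - forwardQuotient l c (i - 1)) := by
  have length_ne_zero : (l i : ℂ) ≠ 0 := Complex.ofReal_ne_zero.2 (hl i)
  have prev_length_ne_zero : (l (i - 1) : ℂ) ≠ 0 := Complex.ofReal_ne_zero.2 (hl (i - 1))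
  simp only [Aop, forwardQuotient, sub_add_cancel]
  field_simp

theorem ipGamma_Aop (hl : ∀ i, l i ≠ 0) (c d : Fin N → ℂ) :
    ipGamma l (Aop l c) d =
      ipGamma l c d + ∑ i, forwardQuotient l c i * (starRingEnd ℂ) (d (i + 1) - d i) := by
  calc ipGamma l (Aop l c) d
      = ∑ i, (c i * (starRingEnd ℂ) (d i) * l i
          - (forwardQuotient l c i - forwardQuotient l c (i - 1)) * (starRingEnd ℂ) (d i)) :=
        Finset.sum_congr rfl fun i _ => by rw [mul_right_comm, Aop_apply_mul hl]; ring
    _ = ipGamma l c d + ∑ i, forwardQuotient l c i * (starRingEnd ℂ) (d (i + 1) - d i) := by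
        rw [Finset.sum_sub_distrib,
          sum_sub_translate_mul_eq_neg_sum _ (fun i => (starRingEnd ℂ) (d i)), sub_neg_eq_add]
        simp only [ipGamma, map_sub]

theorem sum_forwardQuotient_mul_conj (l : Fin N → ℝ) (c : Fin N → ℂ) :
    ∑ i, forwardQuotient l c i * (starRingEnd ℂ) (c (i + 1) - c i) =
      ((∑ i, ‖c (i + 1) - c i‖ ^ 2 / l i : ℝ) : ℂ) := by
  simp only [forwardQuotient, div_mul_eq_mul_div, Complex.mul_conj']
  push_cast
  rfl

theorem ipGamma_Aop_self (hl : ∀ i, l i ≠ 0) (c : Fin N → ℂ) :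
    ipGamma l (Aop l c) c =
      ((∑ i, ‖c i‖ ^ 2 * l i + ∑ i, ‖c (i + 1) - c i‖ ^ 2 / l i : ℝ) : ℂ) := by
  rw [ipGamma_Aop hl, ipGamma_self, sum_forwardQuotient_mul_conj, Complex.ofReal_add]

theorem sum_norm_sq_mul_le_add_sum_jump (hl : ∀ i, 0 ≤ l i) (c : Fin N → ℂ) :
    ∑ i, ‖c i‖ ^ 2 * l i ≤ ∑ i, ‖c i‖ ^ 2 * l i + ∑ i, ‖c (i + 1) - c i‖ ^ 2 / l i :=
  le_add_of_nonneg_right <| Finset.sum_nonneg fun i _ => div_nonneg (sq_nonneg _) (hl i)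

theorem eq_zero_of_Aop_eq_zero (hl : ∀ i, 0 < l i) {c : Fin N → ℂ} (hc : Aop l c = 0) :
    c = 0 := by
  have energy_eq_zero : ∑ i, ‖c i‖ ^ 2 * l i + ∑ i, ‖c (i + 1) - c i‖ ^ 2 / l i = 0 := by
    rw [← Complex.ofReal_eq_zero, ← ipGamma_Aop_self fun i => (hl i).ne', hc]
    simp [ipGamma]
  exact eq_zero_of_sum_norm_sq_mul_nonpos hl <|
    (sum_norm_sq_mul_le_add_sum_jump (fun i => (hl i).le) c).trans_eq energy_eq_zero

/-- The operator `A` bundled as a `ℂ`-linear endomorphism of the space of value vectors. -/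
noncomputable def AopLinearMap (l : Fin N → ℝ) : (Fin N → ℂ) →ₗ[ℂ] (Fin N → ℂ) where
  toFun := Aop l
  map_add' c d := by
    funext i
    simp only [Aop, Pi.add_apply]
    ring
  map_smul' r c := by
    funext i
    simp only [Aop, Pi.smul_apply, smul_eq_mul, RingHom.id_apply]
    ring

theorem Aop_bijective (hl : ∀ i, 0 < l i) : Function.Bijective (Aop l) := by
  have injective : Function.Injective (AopLinearMap l) :=
    (injective_iff_map_eq_zero _).2 fun _ => eq_zero_of_Aop_eq_zero hl
  exact ⟨injective, LinearMap.injective_iff_surjective.1 injective⟩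

end

/-- For every `σ ∈ M` with values `c_i` one has
`(Aσ, σ)_Γ = ∑ |c_i|² l_i + ∑ |c_{i+1} − c_i|²/l_i ≥ ‖σ‖²_{L²(0,L)}`
(note `‖σ‖²_{L²(0,L)} = ∑ |c_i|² l_i`).  Consequently `A : M → M` is invertible. -/
theorem stmt_4 (L : ℝ) (hL : 0 < L) (N : ℕ) [NeZero N] (hN : 2 ≤ N)
    (l : Fin N → ℝ) (hl : ∀ i, 0 < l i) (hsum : ∑ i, l i = L) :
    (∀ c : Fin N → ℂ,
      ipGamma l (Aop l c) c
          = ((∑ i, ‖c i‖ ^ 2 * l i + ∑ i, ‖c (i + 1) - c i‖ ^ 2 / l i : ℝ) : ℂ) ∧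
        (∑ i, ‖c i‖ ^ 2 * l i)
          ≤ ∑ i, ‖c i‖ ^ 2 * l i + ∑ i, ‖c (i + 1) - c i‖ ^ 2 / l i) ∧
      Function.Bijective (Aop l) := by
  refine ⟨fun c => ⟨?_, ?_⟩, Aop_bijective hl⟩
  · exact ipGamma_Aop_self (fun i => (hl i).ne') c
  · exact sum_norm_sq_mul_le_add_sum_jump (fun i => (hl i).le) c
end

section
/- Let σ ∈ M have values c_i on τ_i, and let σ̃ be the L-periodic continuous function that is linear on each τ_i with σ̃(x_i) = c_i for all i. Then there exist constants c, C > 0 depending only on the quasi-uniformity constants C₁, C₂ such that c ‖σ‖²_{L²(0,L)} ≤ ‖σ̃‖²_{L²(0,L)} ≤ C ‖σ‖²_{L²(0,L)}. -/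
open MeasureTheory

/-!
On an element of length `l` with endpoint values `p` and `q`, the squared norm of the linear
interpolant integrates to `l / 3 * (‖p‖² + ⟪p, q⟫ + ‖q‖²)`. This quadratic form lies between
`3 / 4 * ‖p‖²` and `3 / 2 * (‖p‖² + ‖q‖²)`, so the lower bound holds element by element. In the
upper bound the term `l_i ‖v_{i+1}‖²` is absorbed by the next element, which is where comparability
of neighbouring lengths enters, and the cyclic shift `i ↦ i + 1` leaves the total sum unchanged.
-/

theorem le_div_mul_of_mul_le_of_le_mul {𝕜 : Type*} [Field 𝕜] [LinearOrder 𝕜] [IsStrictOrderedRing 𝕜]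
    {C₁ C₂ h l l' : 𝕜} (hC₁ : 0 < C₁) (hC₂ : 0 ≤ C₂) (hl : l ≤ C₂ * h) (hl' : C₁ * h ≤ l') :
    l ≤ C₂ / C₁ * l' :=
  calc
    l ≤ C₂ / C₁ * (C₁ * h) := by rwa [← mul_assoc, div_mul_cancel₀ _ hC₁.ne']
    _ ≤ C₂ / C₁ * l' := by gcongr

theorem sum_comp_perm_mul_le {ι R : Type*} [Fintype ι] [CommSemiring R] [PartialOrder R]
    [IsOrderedRing R] (e : Equiv.Perm ι) {K : R} {u l : ι → R} (hu : ∀ i, 0 ≤ u i)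
    (hl : ∀ i, l i ≤ K * l (e i)) :
    ∑ i, u (e i) * l i ≤ K * ∑ i, u i * l i :=
  calc
    ∑ i, u (e i) * l i ≤ ∑ i, K * (u (e i) * l (e i)) :=
      Finset.sum_le_sum fun i _ ↦
        (mul_le_mul_of_nonneg_left (hl i) (hu (e i))).trans_eq (mul_left_comm _ _ _)
    _ = K * ∑ i, u i * l i := by
      rw [← Finset.mul_sum, Equiv.sum_comp e fun i ↦ u i * l i]

theorem integral_eq_sum_integral_castSucc_succ {F : Type*} [NormedAddCommGroup F] [NormedSpace ℝ F]
    {μ : Measure ℝ} {N : ℕ} {x : Fin (N + 1) → ℝ} {g : ℝ → F}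
    (hg : ∀ i : Fin N, IntervalIntegrable g μ (x i.castSucc) (x i.succ)) :
    ∫ s in x 0..x (Fin.last N), g s ∂μ =
      ∑ i : Fin N, ∫ s in x i.castSucc..x i.succ, g s ∂μ := by
  have castSucc_eq (i : Fin N) : i.castSucc = Fin.ofNat (N + 1) i :=
    (Fin.ofNat_val_eq_self i.castSucc).symm
  have succ_eq (i : Fin N) : i.succ = Fin.ofNat (N + 1) (i + 1) :=
    (Fin.ofNat_val_eq_self i.succ).symm
  have last_eq : Fin.last N = Fin.ofNat (N + 1) N := (Fin.ofNat_val_eq_self (Fin.last N)).symm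
  simp only [castSucc_eq, succ_eq] at hg ⊢
  rw [last_eq, Fin.sum_univ_eq_sum_range fun k ↦
    ∫ s in x (Fin.ofNat (N + 1) k)..x (Fin.ofNat (N + 1) (k + 1)), g s ∂μ]
  exact (intervalIntegral.sum_integral_adjacent_intervals (a := fun k ↦ x (Fin.ofNat (N + 1) k))
    fun k hk ↦ hg ⟨k, hk⟩).symm

section LinearInterpolant

variable {E : Type*} [NormedAddCommGroup E] [InnerProductSpace ℝ E]

open scoped RealInnerProductSpace

theorem three_quarters_mul_norm_sq_le_norm_sq_add_inner_add_norm_sq (p q : E) :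
    3 / 4 * ‖p‖ ^ 2 ≤ ‖p‖ ^ 2 + ⟪p, q⟫ + ‖q‖ ^ 2 := by
  have complete_square := norm_add_sq_real p ((2 : ℝ) • q)
  rw [inner_smul_right, norm_smul, Real.norm_ofNat] at complete_square
  linarith [sq_nonneg ‖p + (2 : ℝ) • q‖]

theorem norm_sq_add_inner_add_norm_sq_le (p q : E) :
    ‖p‖ ^ 2 + ⟪p, q⟫ + ‖q‖ ^ 2 ≤ 3 / 2 * (‖p‖ ^ 2 + ‖q‖ ^ 2) := by
  linarith [norm_sub_sq_real p q, sq_nonneg ‖p - q‖]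

theorem norm_lineMap_sq (p q : E) (t : ℝ) :
    ‖AffineMap.lineMap p q t‖ ^ 2 =
      (1 - t) ^ 2 * ‖p‖ ^ 2 + 2 * (t - t ^ 2) * ⟪p, q⟫ + t ^ 2 * ‖q‖ ^ 2 := by
  rw [AffineMap.lineMap_apply_module, norm_add_sq_real, real_inner_smul_left, inner_smul_right,
    norm_smul, norm_smul, mul_pow, mul_pow, Real.norm_eq_abs, Real.norm_eq_abs, sq_abs, sq_abs]
  ring

theorem integral_norm_lineMap_sq (p q : E) :
    ∫ t in (0 : ℝ)..1, ‖AffineMap.lineMap p q t‖ ^ 2 =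
      (‖p‖ ^ 2 + ⟪p, q⟫ + ‖q‖ ^ 2) / 3 := by
  have antideriv (t : ℝ) : HasDerivAt
      (fun t ↦ -(1 - t) ^ 3 / 3 * ‖p‖ ^ 2 + (t ^ 2 - 2 * t ^ 3 / 3) * ⟪p, q⟫ + t ^ 3 / 3 * ‖q‖ ^ 2)
      (‖AffineMap.lineMap p q t‖ ^ 2) t := by
    have deriv_p := ((((hasDerivAt_id t).const_sub 1).pow 3).neg.div_const 3).mul_const (‖p‖ ^ 2)
    have deriv_inner := ((hasDerivAt_pow 2 t).sub
      (((hasDerivAt_pow 3 t).const_mul 2).div_const 3)).mul_const ⟪p, q⟫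
    have deriv_q := ((hasDerivAt_pow 3 t).div_const 3).mul_const (‖q‖ ^ 2)
    refine ((deriv_p.add deriv_inner).add deriv_q).congr_deriv ?_
    rw [norm_lineMap_sq, id_eq]
    push_cast
    ring
  rw [intervalIntegral.integral_eq_sub_of_hasDerivAt (fun t _ ↦ antideriv t)
    (Continuous.intervalIntegrable (by fun_prop) _ _)]
  ring

theorem integral_norm_lineMap_sub_div_sub_sq (p q : E) (a b : ℝ) :
    ∫ s in a..b, ‖AffineMap.lineMap p q ((s - a) / (b - a))‖ ^ 2 =
      (b - a) * ((‖p‖ ^ 2 + ⟪p, q⟫ + ‖q‖ ^ 2) / 3) := by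
  obtain rfl | hab := eq_or_ne a b
  · simp
  have hba : b - a ≠ 0 := sub_ne_zero.mpr hab.symm
  rw [intervalIntegral.integral_comp_sub_right
      (fun s ↦ ‖AffineMap.lineMap p q (s / (b - a))‖ ^ 2) a,
    intervalIntegral.integral_comp_div (fun t ↦ ‖AffineMap.lineMap p q t‖ ^ 2) hba,
    sub_self, zero_div, div_self hba, integral_norm_lineMap_sq, smul_eq_mul]

theorem integral_norm_sq_of_piecewise_lineMap {N : ℕ} {x : Fin (N + 1) → ℝ} {v w : Fin N → E}
    {f : ℝ → E}
    (hf : ∀ i : Fin N, ∀ s ∈ Set.uIcc (x i.castSucc) (x i.succ),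
      f s = AffineMap.lineMap (v i) (w i) ((s - x i.castSucc) / (x i.succ - x i.castSucc))) :
    ∫ s in x 0..x (Fin.last N), ‖f s‖ ^ 2 =
      ∑ i, (x i.succ - x i.castSucc) * ((‖v i‖ ^ 2 + ⟪v i, w i⟫ + ‖w i‖ ^ 2) / 3) := by
  have norm_sq_eqOn (i : Fin N) : Set.EqOn (fun s ↦ ‖f s‖ ^ 2)
      (fun s ↦ ‖AffineMap.lineMap (v i) (w i)
        ((s - x i.castSucc) / (x i.succ - x i.castSucc))‖ ^ 2)
      (Set.uIcc (x i.castSucc) (x i.succ)) :=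
    fun s hs ↦ by simp only [hf i s hs]
  rw [integral_eq_sum_integral_castSucc_succ fun i ↦
    (ContinuousOn.congr (by fun_prop) (norm_sq_eqOn i)).intervalIntegrable]
  refine Finset.sum_congr rfl fun i _ ↦ ?_
  rw [intervalIntegral.integral_congr (norm_sq_eqOn i), integral_norm_lineMap_sub_div_sub_sq]

theorem stmt_12_general {N : ℕ} [NeZero N] {K : ℝ} {x : Fin (N + 1) → ℝ} (hx : StrictMono x)
    (hK : ∀ i : Fin N,
      x i.succ - x i.castSucc ≤ K * (x (i + 1).succ - x (i + 1).castSucc))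
    {v : Fin N → E} {f : ℝ → E}
    (hf : ∀ i : Fin N, ∀ s ∈ Set.Icc (x i.castSucc) (x i.succ),
      f s = AffineMap.lineMap (v i) (v (i + 1)) ((s - x i.castSucc) / (x i.succ - x i.castSucc))) :
    1 / 4 * ∑ i, ‖v i‖ ^ 2 * (x i.succ - x i.castSucc) ≤
        ∫ s in x 0..x (Fin.last N), ‖f s‖ ^ 2 ∧
      ∫ s in x 0..x (Fin.last N), ‖f s‖ ^ 2 ≤
        (1 + K) / 2 * ∑ i, ‖v i‖ ^ 2 * (x i.succ - x i.castSucc) := by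
  have length_pos (i : Fin N) : 0 < x i.succ - x i.castSucc := sub_pos.mpr (hx i.castSucc_lt_succ)
  rw [integral_norm_sq_of_piecewise_lineMap fun i ↦
    (Set.uIcc_of_le (hx i.castSucc_lt_succ).le).symm ▸ hf i]
  constructor
  · rw [Finset.mul_sum]
    refine Finset.sum_le_sum fun i _ ↦ ?_
    linarith [mul_le_mul_of_nonneg_left
      (three_quarters_mul_norm_sq_le_norm_sq_add_inner_add_norm_sq (v i) (v (i + 1)))
      (length_pos i).le]
  · calc
      _ ≤ ∑ i, (1 / 2 * (‖v i‖ ^ 2 * (x i.succ - x i.castSucc)) +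
            1 / 2 * (‖v (i + 1)‖ ^ 2 * (x i.succ - x i.castSucc))) := by
        refine Finset.sum_le_sum fun i _ ↦ ?_
        linarith [mul_le_mul_of_nonneg_left
          (norm_sq_add_inner_add_norm_sq_le (v i) (v (i + 1))) (length_pos i).le]
      _ ≤ (1 + K) / 2 * ∑ i, ‖v i‖ ^ 2 * (x i.succ - x i.castSucc) := by
        rw [Finset.sum_add_distrib, ← Finset.mul_sum, ← Finset.mul_sum]
        have shifted_sum_le :
            ∑ i, ‖v (i + 1)‖ ^ 2 * (x i.succ - x i.castSucc) ≤
              K * ∑ i, ‖v i‖ ^ 2 * (x i.succ - x i.castSucc) :=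
          sum_comp_perm_mul_le (Equiv.addRight 1) (u := fun i ↦ ‖v i‖ ^ 2)
            (fun i ↦ sq_nonneg ‖v i‖) hK
        linarith

end LinearInterpolant

/-- Let `σ ∈ M` be piecewise constant with values `c_i` on `τ_i` and let
`σ̃` be the `L`-periodic continuous function, linear on each `τ_i`, with `σ̃(x_i) = c_i`
for all `i` (indices mod `N`).  Then there exist constants `c, C > 0` depending only on the
quasi-uniformity constants `C₁, C₂` such that
`c ‖σ‖²_{L²(0,L)} ≤ ‖σ̃‖²_{L²(0,L)} ≤ C ‖σ‖²_{L²(0,L)}`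
(with `‖σ‖²_{L²(0,L)} = ∑ i, |c_i|² l_i`). -/
theorem stmt_12 (C₁ C₂ : ℝ) (hC₁ : 0 < C₁) (hC₂ : 0 < C₂) :
    ∃ c > 0, ∃ C > 0, ∀ (L : ℝ), 0 < L → ∀ (N : ℕ) [NeZero N], 2 ≤ N →
      ∀ (x : Fin (N + 1) → ℝ), StrictMono x → x 0 = 0 → x (Fin.last N) = L →
      ∀ h : ℝ, IsGreatest (Set.range fun i : Fin N => x i.succ - x i.castSucc) h →
      (∀ i : Fin N, C₁ * h ≤ x i.succ - x i.castSucc ∧ x i.succ - x i.castSucc ≤ C₂ * h) →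
      ∀ (cv : Fin N → ℂ) (σt : ℝ → ℂ), (∀ s, σt (s + L) = σt s) →
      (∀ (i : Fin N), ∀ s ∈ Set.Icc (x i.castSucc) (x i.succ),
        σt s = cv i
          + (((s - x i.castSucc) / (x i.succ - x i.castSucc) : ℝ) : ℂ) * (cv (i + 1) - cv i)) →
      c * (∑ i : Fin N, ‖cv i‖ ^ 2 * (x i.succ - x i.castSucc))
          ≤ (∫ s in (0:ℝ)..L, ‖σt s‖ ^ 2) ∧
        (∫ s in (0:ℝ)..L, ‖σt s‖ ^ 2)
          ≤ C * ∑ i : Fin N, ‖cv i‖ ^ 2 * (x i.succ - x i.castSucc) := by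
  refine ⟨1 / 4, by norm_num, (1 + C₂ / C₁) / 2, by positivity, ?_⟩
  rintro _ - N _ - x hx hx0 rfl h - hlength cv σt - hσt
  rw [← hx0]
  refine stmt_12_general hx (fun i ↦ le_div_mul_of_mul_le_of_le_mul hC₁ hC₂.le (hlength i).2
    (hlength (i + 1)).1) fun i s hs ↦ ?_
  rw [hσt i s hs, AffineMap.lineMap_apply_module', Complex.real_smul, add_comm]
end

section
/- Let X be a complex normed space and let T_k, T̃_k (k = 1, …, J) be bounded linear operators on X. Let α > 0, h₁ > 0, and set h_k = h₁ 2^{1−k}. Assume that ‖I − T̃_k‖ ≤ 1 for every k and that ‖T_k − T̃_k‖ ≤ C₁ h_k^{α} for every k, for some constant C₁ > 0. Then there is a constant C₂ > 0 depending only on C₁, α and h₁ (and in particular independent of J) such that ‖(I − T_1)(I − T_2)⋯(I − T_J)‖ ≤ ‖(I − T̃_1)(I − T̃_2)⋯(I − T̃_J)‖ + C₂ h₁^{α}. -/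
/-!
If `‖B k‖ ≤ b k` and `‖A k - B k‖ ≤ e k`, then replacing the factors of `∏ B k` by those of `∏ A k`
one at a time costs at most `∏ (b k + e k) - ∏ b k`. For `b k = 1` and `e k = c * r ^ k` with
`r < 1`, this is at most `exp (c / (1 - r)) - 1`, whatever the number of factors. The theorem is the
case `r = 2 ^ (-α)`, `c = C₁ * h₁ ^ α`.
-/

theorem prod_map_range_one_add_geometric_le_exp {c r : ℝ} (hc : 0 ≤ c) (hr₀ : 0 ≤ r) (hr₁ : r < 1)
    (n : ℕ) : ((List.range n).map fun k => 1 + c * r ^ k).prod ≤ Real.exp (c / (1 - r)) := by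
  have geom_sum_le : ∑ k ∈ Finset.range n, r ^ k ≤ 1 / (1 - r) := by
    simpa using geom_sum_Ico_le_of_lt_one (m := 0) (n := n) hr₀ hr₁
  calc ((List.range n).map fun k => 1 + c * r ^ k).prod
      = ∏ k ∈ Finset.range n, (1 + c * r ^ k) := rfl
    _ ≤ Real.exp (∑ k ∈ Finset.range n, c * r ^ k) :=
        Real.prod_one_add_le_exp_sum _ fun k => by positivity
    _ = Real.exp (c * ∑ k ∈ Finset.range n, r ^ k) := by rw [Finset.mul_sum]
    _ ≤ Real.exp (c * (1 / (1 - r))) := by gcongr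
    _ = Real.exp (c / (1 - r)) := by rw [mul_one_div]

theorem norm_mul_sub_mul_le {R : Type*} [NonUnitalSeminormedRing R] {a a' b b' : R} {p q r s : ℝ}
    (haa' : ‖a - a'‖ ≤ p) (hb : ‖b‖ ≤ q) (ha' : ‖a'‖ ≤ r) (hbb' : ‖b - b'‖ ≤ s) :
    ‖a * b - a' * b'‖ ≤ p * q + r * s :=
  calc ‖a * b - a' * b'‖ = ‖(a - a') * b + a' * (b - b')‖ := by
        rw [sub_mul, mul_sub, sub_add_sub_cancel]
    _ ≤ p * q + r * s := norm_add_le_of_le (norm_mul_le_of_le haa' hb) (norm_mul_le_of_le ha' hbb')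

section PerturbedProduct

variable {ι R : Type*} [SeminormedRing R]

theorem norm_prod_map_le_prod_map {l : List ι} (hl : l ≠ []) {f : ι → R} {c : ι → ℝ}
    (hf : ∀ i ∈ l, ‖f i‖ ≤ c i) : ‖(l.map f).prod‖ ≤ (l.map c).prod :=
  calc ‖(l.map f).prod‖ ≤ ((l.map f).map norm).prod := List.norm_prod_le' (by simpa using hl)
    _ = (l.map fun i => ‖f i‖).prod := by rw [List.map_map]; rfl
    _ ≤ (l.map c).prod := List.prod_map_le_prod_map₀ _ _ (fun _ _ => norm_nonneg _) hf

theorem norm_prod_map_sub_prod_map_le {A B : ι → R} {b e : ι → ℝ} :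
    ∀ {l : List ι}, l ≠ [] → (∀ i ∈ l, ‖B i‖ ≤ b i) → (∀ i ∈ l, ‖A i - B i‖ ≤ e i) →
      ‖(l.map A).prod - (l.map B).prod‖ ≤ (l.map fun i => b i + e i).prod - (l.map b).prod
  | [], hl, _, _ => absurd rfl hl
  | [i], _, _, hAB => by simpa using hAB i
  | i :: j :: l, _, hB, hAB => by
    obtain ⟨hBi, hBl⟩ := List.forall_mem_cons.1 hB
    obtain ⟨hABi, hABl⟩ := List.forall_mem_cons.1 hAB
    have hne : j :: l ≠ [] := List.cons_ne_nil j l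
    have hA : ∀ k ∈ j :: l, ‖A k‖ ≤ b k + e k := fun k hk =>
      (norm_le_norm_add_norm_sub' _ _).trans (add_le_add (hBl k hk) (hABl k hk))
    calc ‖((i :: j :: l).map A).prod - ((i :: j :: l).map B).prod‖
        = ‖A i * ((j :: l).map A).prod - B i * ((j :: l).map B).prod‖ := by
          simp only [List.map_cons, List.prod_cons]
      _ ≤ e i * ((j :: l).map fun k => b k + e k).prod +
            b i * (((j :: l).map fun k => b k + e k).prod - ((j :: l).map b).prod) :=
          norm_mul_sub_mul_le hABi (norm_prod_map_le_prod_map hne hA) hBi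
            (norm_prod_map_sub_prod_map_le hne hBl hABl)
      _ = ((i :: j :: l).map fun k => b k + e k).prod - ((i :: j :: l).map b).prod := by
          simp only [List.map_cons, List.prod_cons]
          ring

theorem norm_prod_range_sub_prod_range_le_of_geometric {A B : ℕ → R} {c r : ℝ} (hc : 0 ≤ c)
    (hr₀ : 0 ≤ r) (hr₁ : r < 1) {n : ℕ} (hn : n ≠ 0) (hB : ∀ k < n, ‖B k‖ ≤ 1)
    (hAB : ∀ k < n, ‖A k - B k‖ ≤ c * r ^ k) :
    ‖((List.range n).map A).prod - ((List.range n).map B).prod‖ ≤ Real.exp (c / (1 - r)) - 1 := by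
  have perturbation := norm_prod_map_sub_prod_map_le (b := fun _ => 1) (e := fun k => c * r ^ k)
    (List.range_eq_nil.not.2 hn) (fun k hk => hB k (List.mem_range.1 hk))
    (fun k hk => hAB k (List.mem_range.1 hk))
  rw [List.map_const', List.prod_replicate, one_pow] at perturbation
  exact perturbation.trans
    (sub_le_sub_right (prod_map_range_one_add_geometric_le_exp hc hr₀ hr₁ n) 1)

end PerturbedProduct

theorem mul_two_zpow_one_sub_succ_rpow {h : ℝ} (hh : 0 ≤ h) (α : ℝ) (k : ℕ) :
    (h * 2 ^ (1 - ((k + 1 : ℕ) : ℤ))) ^ α = h ^ α * ((2 : ℝ) ^ (-α)) ^ k := by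
  have exponent : 1 - ((k + 1 : ℕ) : ℤ) = -(k : ℤ) := by push_cast; ring
  rw [exponent, Real.mul_rpow hh (by positivity), ← Real.rpow_intCast, ← Real.rpow_mul zero_le_two,
    ← Real.rpow_mul_natCast zero_le_two]
  push_cast
  ring_nf

theorem stmt_15_general (C₁ α h₁ : ℝ) (hC₁ : 0 < C₁) (hα : 0 < α) (hh₁ : 0 < h₁) :
    ∃ C₂ > 0, ∀ (R : Type*) [SeminormedRing R] (J : ℕ), 1 ≤ J → ∀ T T' : ℕ → R,
      (∀ k, 1 ≤ k → k ≤ J → ‖1 - T' k‖ ≤ 1) →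
      (∀ k, 1 ≤ k → k ≤ J → ‖T k - T' k‖ ≤ C₁ * (h₁ * 2 ^ (1 - (k : ℤ))) ^ α) →
      ‖((List.range J).map fun k => 1 - T (k + 1)).prod‖
        ≤ ‖((List.range J).map fun k => 1 - T' (k + 1)).prod‖ + C₂ * h₁ ^ α := by
  have hr₁ : (2 : ℝ) ^ (-α) < 1 :=
    Real.rpow_lt_one_of_one_lt_of_neg one_lt_two (neg_lt_zero.2 hα)
  have hh₁α : 0 < h₁ ^ α := Real.rpow_pos_of_pos hh₁ α
  have hexponent : 0 < C₁ * h₁ ^ α / (1 - 2 ^ (-α)) :=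
    div_pos (mul_pos hC₁ hh₁α) (sub_pos.2 hr₁)
  refine ⟨(Real.exp (C₁ * h₁ ^ α / (1 - 2 ^ (-α))) - 1) / h₁ ^ α,
    div_pos (sub_pos.2 (Real.one_lt_exp_iff.2 hexponent)) hh₁α, fun R _ J hJ T T' hT' hT => ?_⟩
  have hdiff : ∀ k < J, ‖(1 - T (k + 1)) - (1 - T' (k + 1))‖ ≤
      C₁ * h₁ ^ α * ((2 : ℝ) ^ (-α)) ^ k := fun k hk => by
    rw [sub_sub_sub_cancel_left, norm_sub_rev, mul_assoc,
      ← mul_two_zpow_one_sub_succ_rpow hh₁.le]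
    exact hT (k + 1) k.succ_pos hk
  rw [div_mul_cancel₀ _ hh₁α.ne']
  exact (norm_le_norm_add_norm_sub' _ _).trans <| add_le_add_right
    (norm_prod_range_sub_prod_range_le_of_geometric (by positivity) (by positivity) hr₁
      (Nat.one_le_iff_ne_zero.1 hJ) (fun k hk => hT' (k + 1) k.succ_pos hk) hdiff) _

/-- Let `α > 0`, `h₁ > 0`, `C₁ > 0`.  Then there is a constant `C₂ > 0`
depending only on `C₁`, `α` and `h₁` (and in particular independent of `J`) such that the
following holds: for every complex normed space `X` and bounded linear operators
`T_k, T̃_k` (`k = 1, …, J`) on `X` with `‖I − T̃_k‖ ≤ 1` for every `k` and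
`‖T_k − T̃_k‖ ≤ C₁ h_k^α` for every `k`, where `h_k = h₁ 2^{1−k}`, one has
`‖(I − T_1)(I − T_2)⋯(I − T_J)‖ ≤ ‖(I − T̃_1)(I − T̃_2)⋯(I − T̃_J)‖ + C₂ h₁^α`.
(Products of operators in `X →L[ℂ] X` are compositions, in the indicated order.) -/
theorem stmt_15 (C₁ α h₁ : ℝ) (hC₁ : 0 < C₁) (hα : 0 < α) (hh₁ : 0 < h₁) :
    ∃ C₂ > 0, ∀ (X : Type*) [inst₁ : NormedAddCommGroup X] [inst₂ : NormedSpace ℂ X]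
      (J : ℕ), 1 ≤ J → ∀ T T' : ℕ → X →L[ℂ] X,
      (∀ k, 1 ≤ k → k ≤ J → ‖(1 : X →L[ℂ] X) - T' k‖ ≤ 1) →
      (∀ k, 1 ≤ k → k ≤ J → ‖T k - T' k‖ ≤ C₁ * (h₁ * 2 ^ (1 - (k : ℤ))) ^ α) →
      ‖((List.range J).map fun k => 1 - T (k + 1)).prod‖
        ≤ ‖((List.range J).map fun k => 1 - T' (k + 1)).prod‖ + C₂ * h₁ ^ α := by
  obtain ⟨C₂, hC₂, bound⟩ := stmt_15_general C₁ α h₁ hC₁ hα hh₁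
  exact ⟨C₂, hC₂, fun X _ _ => bound (X →L[ℂ] X)⟩
end
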